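/- arXiv:1109.5430 — 2 statements merged into one kernel-verified Lean document; each statement's English description precedes it below -/
import Mathlib

section
/- Suppose (i) 1 − (d−1)ν − (2K−1)dμ_B > 0 and (ii) [1 − (d−1)ν − (2K−1)dμ_B]² / (1 − (d−1)ν − (K−1)dμ_B) > ω / x_{b,min}. Then for every subset S ⊆ I1 with 0 ≤ |S| ≤ K−1, the residual r = y − P_S y, where P_S is the orthogonal projection onto the column span of the blocks {A_l : l ∈ S}, satisfies max_{l ∉ I1} ‖A_l^T r‖_2 < max_{l ∈ I1} ‖A_l^T r‖_2. Consequently, the block-OMP algorithm (which at each step selects the block index l maximizing ‖A_l^T r‖_2 of the current residual r) selects only indices from I1 throughout its first K iterations, and hence recovers the exact block-sparsity pattern. -/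
/- Setting: a measurement matrix `A ∈ ℝ^{m×n}` with `n = L·d`, partitioned into `L` column
blocks of size `m×d`; columns are indexed by pairs `(l, j)` (block `l`, position `j`). -/

noncomputable section

open Finset Matrix

/-- Euclidean (ℓ₂) norm of a finitely indexed real vector. -/
def e2norm {ι : Type*} [Fintype ι] (v : ι → ℝ) : ℝ := Real.sqrt (∑ i, v i ^ 2)

/-- Euclidean inner (dot) product of two real vectors. -/
def dotp {ι : Type*} [Fintype ι] (u v : ι → ℝ) : ℝ := ∑ i, u i * v i

/-- The `(l, j)` column of the block matrix `A` (block `l`, position `j` inside the block). -/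
def acol {m L d : ℕ} (A : Matrix (Fin m) (Fin L × Fin d) ℝ) (l : Fin L) (j : Fin d) :
    Fin m → ℝ :=
  fun i => A i (l, j)

/-- `A_lᵀ v` : correlation of the `l`-th block of `A` with a vector `v ∈ ℝ^m`. -/
def blkT {m L d : ℕ} (A : Matrix (Fin m) (Fin L × Fin d) ℝ) (l : Fin L) (v : Fin m → ℝ) :
    Fin d → ℝ :=
  fun j => dotp (acol A l j) v

/-- Spectral norm (largest singular value) `ρ(X)` of a real matrix, as the supremum of
`‖Xu‖₂ / ‖u‖₂` over nonzero `u`. -/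
def specNorm {p q : ℕ} (X : Matrix (Fin p) (Fin q) ℝ) : ℝ :=
  ⨆ u : {u : Fin q → ℝ // u ≠ 0}, e2norm (X *ᵥ u.1) / e2norm u.1

/-- The `d × d` cross-Gram matrix `A_iᵀ A_j` of two blocks of `A`. -/
def bgram {m L d : ℕ} (A : Matrix (Fin m) (Fin L × Fin d) ℝ) (i j : Fin L) :
    Matrix (Fin d) (Fin d) ℝ :=
  fun a b => dotp (acol A i a) (acol A j b)

/-- Block-coherence `μ_B = max_{i ≠ j} (1/d) ρ(A_iᵀ A_j)`. -/
def blockCoh {m L d : ℕ} (A : Matrix (Fin m) (Fin L × Fin d) ℝ) : ℝ :=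
  ⨆ p : {p : Fin L × Fin L // p.1 ≠ p.2},
    (1 / (d : ℝ)) * specNorm (bgram A p.1.1 p.1.2)

/-- Sub-coherence `ν`: the maximum of `|a_iᵀ a_j|` over pairs of distinct columns lying in the
same block of `A`. -/
def subCoh {m L d : ℕ} (A : Matrix (Fin m) (Fin L × Fin d) ℝ) : ℝ :=
  ⨆ t : {t : Fin L × Fin d × Fin d // t.2.1 ≠ t.2.2},
    |dotp (acol A t.1.1 t.1.2.1) (acol A t.1.1 t.1.2.2)|

/-! Subtracting a combination of the blocks in `S` only alters the coefficients there, so the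
residual is `w̃ + ∑_{k ∈ I1} A_k z_k` with `z_k = x̃_k` for `k ∉ S`. Let `Z = ‖z_k‖` be the
largest block norm. Testing the residual against that `A_kᵀ` kills `w̃`; the block `A_kᵀ A_k` is
diagonally dominant and the other `K - 1` blocks contribute at most `d μ_B Z` each, so the
correlation is at least `(1 - (d-1)ν - (K-1)dμ_B) Z`. Off the support it is at most
`ω + K d μ_B Z`. The gap is `(1 - (d-1)ν - (2K-1)dμ_B) Z - ω`, and `Z ≥ x_{b,min}` because some
`k ∈ I1` is missing from `S`. -/

theorem ciSup_lt_ciSup_of_forall_lt {α ι κ : Type*} [ConditionallyCompleteLinearOrder α]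
    [Nonempty ι] [Finite ι] [Finite κ] {f : ι → α} {g : κ → α} (k : κ) (h : ∀ i, f i < g k) :
    ⨆ i, f i < ⨆ k, g k := by
  obtain ⟨i, hi⟩ := exists_eq_ciSup_of_finite (f := f)
  exact hi ▸ (h i).trans_le (Finite.le_ciSup g k)

section EuclideanNorm

variable {ι κ : Type*} [Fintype ι]

theorem e2norm_eq_norm_toLp (v : ι → ℝ) : e2norm v = ‖WithLp.toLp 2 v‖ := by
  simp [e2norm, EuclideanSpace.norm_eq]

theorem e2norm_nonneg (v : ι → ℝ) : 0 ≤ e2norm v :=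
  Real.sqrt_nonneg _

theorem e2norm_zero : e2norm (0 : ι → ℝ) = 0 := by
  simp [e2norm]

theorem e2norm_pos {v : ι → ℝ} (hv : v ≠ 0) : 0 < e2norm v := by
  simpa [e2norm_eq_norm_toLp] using hv

theorem e2norm_sq (v : ι → ℝ) : e2norm v ^ 2 = v ⬝ᵥ v := by
  rw [e2norm_eq_norm_toLp, EuclideanSpace.real_norm_sq_eq]
  simp only [dotProduct, sq]

theorem e2norm_add_le (u v : ι → ℝ) : e2norm (u + v) ≤ e2norm u + e2norm v := by
  simpa [e2norm_eq_norm_toLp] using norm_add_le (WithLp.toLp 2 u) (WithLp.toLp 2 v)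

theorem e2norm_sub_le_e2norm_add (u v : ι → ℝ) : e2norm u - e2norm v ≤ e2norm (u + v) := by
  simpa [e2norm_eq_norm_toLp] using norm_sub_le_norm_add (WithLp.toLp 2 u) (WithLp.toLp 2 v)

theorem e2norm_sum_le (s : Finset κ) (f : κ → ι → ℝ) :
    e2norm (∑ k ∈ s, f k) ≤ ∑ k ∈ s, e2norm (f k) := by
  simpa [e2norm_eq_norm_toLp] using norm_sum_le s fun k => WithLp.toLp 2 (f k)

theorem dotProduct_le_e2norm_mul_e2norm (u v : ι → ℝ) : u ⬝ᵥ v ≤ e2norm u * e2norm v :=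
  Real.sum_mul_le_sqrt_mul_sqrt _ _ _

end EuclideanNorm

section DiagonalDominance

variable {ι : Type*} [Fintype ι] {G : Matrix ι ι ℝ} {c ν : ℝ}

theorem mul_dotProduct_self_le_dotProduct_mulVec (hdiag : ∀ a, c ≤ G a a)
    (hoff : ∀ a b, a ≠ b → |G a b| ≤ ν) (v : ι → ℝ) :
    (c - (Fintype.card ι - 1) * ν) * (v ⬝ᵥ v) ≤ v ⬝ᵥ G *ᵥ v := by
  classical
  have entry_le (a b : ι) :
      (if a = b then (c + ν) * v a ^ 2 else 0) - ν * ((v a ^ 2 + v b ^ 2) / 2)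
        ≤ v a * (G a b * v b) := by
    split_ifs with hab
    · subst hab
      linarith [mul_le_mul_of_nonneg_right (hdiag a) (sq_nonneg (v a))]
    · have hprod : |v a * v b| ≤ (v a ^ 2 + v b ^ 2) / 2 :=
        abs_le.2 ⟨by linarith [sq_nonneg (v a + v b)], by linarith [sq_nonneg (v a - v b)]⟩
      have hterm : |G a b * (v a * v b)| ≤ ν * ((v a ^ 2 + v b ^ 2) / 2) := by
        rw [abs_mul]
        exact mul_le_mul (hoff a b hab) hprod (abs_nonneg _) ((abs_nonneg _).trans (hoff a b hab))
      linarith [neg_le_of_abs_le hterm]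
  calc (c - (Fintype.card ι - 1) * ν) * (v ⬝ᵥ v)
      = ∑ a, ∑ b,
          ((if a = b then (c + ν) * v a ^ 2 else 0) - ν * ((v a ^ 2 + v b ^ 2) / 2)) := by
        simp only [dotProduct, ← sq, sum_sub_distrib, sum_ite_eq, mem_univ, if_true, ← mul_sum,
          ← sum_div, sum_add_distrib, sum_const, card_univ, nsmul_eq_mul]
        ring
    _ ≤ ∑ a, ∑ b, v a * (G a b * v b) := sum_le_sum fun a _ => sum_le_sum fun b _ => entry_le a b
    _ = v ⬝ᵥ G *ᵥ v := by simp only [dotProduct, mulVec, mul_sum]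

theorem mul_e2norm_le_e2norm_mulVec (hdiag : ∀ a, c ≤ G a a)
    (hoff : ∀ a b, a ≠ b → |G a b| ≤ ν) (v : ι → ℝ) :
    (c - (Fintype.card ι - 1) * ν) * e2norm v ≤ e2norm (G *ᵥ v) := by
  obtain rfl | hv := eq_or_ne v 0
  · simp [e2norm_zero]
  refine le_of_mul_le_mul_left ?_ (e2norm_pos hv)
  calc e2norm v * ((c - (Fintype.card ι - 1) * ν) * e2norm v)
      = (c - (Fintype.card ι - 1) * ν) * (v ⬝ᵥ v) := by rw [← e2norm_sq]; ring
    _ ≤ v ⬝ᵥ G *ᵥ v := mul_dotProduct_self_le_dotProduct_mulVec hdiag hoff v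
    _ ≤ e2norm v * e2norm (G *ᵥ v) := dotProduct_le_e2norm_mul_e2norm _ _

end DiagonalDominance

section SpectralNorm

variable {p q : ℕ} (X : Matrix (Fin p) (Fin q) ℝ)

theorem specNorm_nonneg : 0 ≤ specNorm X :=
  Real.iSup_nonneg fun _ => div_nonneg (e2norm_nonneg _) (e2norm_nonneg _)

open scoped Matrix.Norms.L2Operator in
theorem bddAbove_range_e2norm_mulVec_div :
    BddAbove (Set.range fun u : {u : Fin q → ℝ // u ≠ 0} => e2norm (X *ᵥ u.1) / e2norm u.1) := by
  refine ⟨‖X‖, ?_⟩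
  rintro _ ⟨⟨u, hu⟩, rfl⟩
  rw [div_le_iff₀ (e2norm_pos hu), e2norm_eq_norm_toLp, e2norm_eq_norm_toLp]
  exact l2_opNorm_mulVec X (WithLp.toLp 2 u)

theorem e2norm_mulVec_le_specNorm_mul (u : Fin q → ℝ) :
    e2norm (X *ᵥ u) ≤ specNorm X * e2norm u := by
  obtain rfl | hu := eq_or_ne u 0
  · simp [e2norm_zero]
  · rw [← div_le_iff₀ (e2norm_pos hu)]
    exact le_ciSup (bddAbove_range_e2norm_mulVec_div X) ⟨u, hu⟩

end SpectralNorm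

section Blocks

variable {m L d : ℕ} (A : Matrix (Fin m) (Fin L × Fin d) ℝ)

/-- The `l`-th column block `A_l` of `A`, used to express `blkT`, `bgram` and `blockComb` through
matrix algebra. -/
def colBlock (l : Fin L) : Matrix (Fin m) (Fin d) ℝ :=
  A.submatrix id (Prod.mk l)

/-- The combination `∑_{l ∈ s} A_l c_l` of the column blocks indexed by `s`, that is, the general
element of their column span. It is written entrywise, and the values of `c` off `s` are ignored. -/
def blockComb (s : Finset (Fin L)) (c : Fin L → Fin d → ℝ) : Fin m → ℝ :=
  fun i => ∑ l ∈ s, ∑ j, A i (l, j) * c l j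

theorem blkT_eq_mulVec (l : Fin L) (v : Fin m → ℝ) : blkT A l v = (colBlock A l)ᵀ *ᵥ v :=
  rfl

theorem bgram_eq_mul (k l : Fin L) : bgram A k l = (colBlock A k)ᵀ * colBlock A l :=
  rfl

theorem blockComb_eq_sum_mulVec (s : Finset (Fin L)) (c : Fin L → Fin d → ℝ) :
    blockComb A s c = ∑ l ∈ s, colBlock A l *ᵥ c l := by
  ext i
  simp [blockComb, colBlock, mulVec, dotProduct]

theorem blkT_blockComb (l : Fin L) (s : Finset (Fin L)) (c : Fin L → Fin d → ℝ) :
    blkT A l (blockComb A s c) = ∑ k ∈ s, bgram A l k *ᵥ c k := by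
  simp only [blkT_eq_mulVec, bgram_eq_mul, blockComb_eq_sum_mulVec, mulVec_sum, mulVec_mulVec]

theorem blockComb_sub_blockComb_of_subset {s t : Finset (Fin L)} (hst : s ⊆ t)
    (b c : Fin L → Fin d → ℝ) :
    blockComb A t b - blockComb A s c = blockComb A t (b - (s : Set (Fin L)).indicator c) := by
  have hextend : blockComb A s c = blockComb A t ((s : Set (Fin L)).indicator c) := by
    simp only [blockComb_eq_sum_mulVec]
    exact (sum_indicator_subset_of_eq_zero c (fun l v => colBlock A l *ᵥ v) hst
      fun l => mulVec_zero (colBlock A l)).symm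
  simp only [hextend, blockComb_eq_sum_mulVec, Pi.sub_apply, mulVec_sub, sum_sub_distrib]

theorem blockCoh_nonneg : 0 ≤ blockCoh A :=
  Real.iSup_nonneg fun _ => mul_nonneg (by positivity) (specNorm_nonneg _)

theorem specNorm_bgram_le {k l : Fin L} (hkl : k ≠ l) (hd : 0 < d) :
    specNorm (bgram A k l) ≤ d * blockCoh A := by
  rw [← inv_mul_le_iff₀ (Nat.cast_pos.2 hd), ← one_div]
  exact Finite.le_ciSup (fun p : {p : Fin L × Fin L // p.1 ≠ p.2} =>
    (1 / (d : ℝ)) * specNorm (bgram A p.1.1 p.1.2)) ⟨(k, l), hkl⟩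

theorem e2norm_bgram_mulVec_le {k l : Fin L} (hkl : k ≠ l) (u : Fin d → ℝ) :
    e2norm (bgram A k l *ᵥ u) ≤ d * blockCoh A * e2norm u := by
  obtain rfl | hd := d.eq_zero_or_pos
  · simp [e2norm]
  · exact (e2norm_mulVec_le_specNorm_mul _ u).trans
      (mul_le_mul_of_nonneg_right (specNorm_bgram_le A hkl hd) (e2norm_nonneg u))

theorem abs_bgram_self_le_subCoh (l : Fin L) {a b : Fin d} (hab : a ≠ b) :
    |bgram A l l a b| ≤ subCoh A :=
  Finite.le_ciSup (fun t : {t : Fin L × Fin d × Fin d // t.2.1 ≠ t.2.2} =>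
    |dotp (acol A t.1.1 t.1.2.1) (acol A t.1.1 t.1.2.2)|) ⟨(l, a, b), hab⟩

theorem e2norm_sum_bgram_mulVec_le {s : Finset (Fin L)} {l : Fin L} (hl : l ∉ s)
    {z : Fin L → Fin d → ℝ} {Z : ℝ} (hz : ∀ k ∈ s, e2norm (z k) ≤ Z) :
    e2norm (∑ k ∈ s, bgram A l k *ᵥ z k) ≤ #s * (d * blockCoh A * Z) := by
  have hμ := blockCoh_nonneg A
  calc e2norm (∑ k ∈ s, bgram A l k *ᵥ z k)
      ≤ ∑ k ∈ s, e2norm (bgram A l k *ᵥ z k) := e2norm_sum_le _ _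
    _ ≤ ∑ _k ∈ s, d * blockCoh A * Z := sum_le_sum fun k hk =>
        (e2norm_bgram_mulVec_le A (ne_of_mem_of_not_mem hk hl).symm (z k)).trans
          (mul_le_mul_of_nonneg_left (hz k hk) (by positivity))
    _ = #s * (d * blockCoh A * Z) := by rw [sum_const, nsmul_eq_mul]

variable {A}

theorem bgram_self_apply_self (hA : ∀ l j, e2norm (acol A l j) = 1) (l : Fin L) (j : Fin d) :
    bgram A l l j j = 1 := by
  have hsq := e2norm_sq (acol A l j)
  rw [hA, one_pow] at hsq
  exact hsq.symm

theorem mul_e2norm_le_e2norm_bgram_self_mulVec (hA : ∀ l j, e2norm (acol A l j) = 1) (l : Fin L)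
    (v : Fin d → ℝ) :
    (1 - (d - 1) * subCoh A) * e2norm v ≤ e2norm (bgram A l l *ᵥ v) := by
  simpa only [Fintype.card_fin] using
    mul_e2norm_le_e2norm_mulVec (fun a => (bgram_self_apply_self hA l a).ge)
      (fun _ _ => abs_bgram_self_le_subCoh A l) v

theorem mul_e2norm_le_e2norm_sum_bgram_mulVec (hA : ∀ l j, e2norm (acol A l j) = 1)
    {s : Finset (Fin L)} {l : Fin L} (hl : l ∈ s) {z : Fin L → Fin d → ℝ}
    (hz : ∀ k ∈ s, e2norm (z k) ≤ e2norm (z l)) :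
    (1 - (d - 1) * subCoh A - (#s - 1) * d * blockCoh A) * e2norm (z l)
      ≤ e2norm (∑ k ∈ s, bgram A l k *ᵥ z k) := by
  have hoff := e2norm_sum_bgram_mulVec_le A (notMem_erase l s)
    fun k hk => hz k (mem_of_mem_erase hk)
  rw [cast_card_erase_of_mem hl] at hoff
  rw [← add_sum_erase _ _ hl]
  linarith [mul_e2norm_le_e2norm_bgram_self_mulVec hA l (z l),
    e2norm_sub_le_e2norm_add (bgram A l l *ᵥ z l) (∑ k ∈ s.erase l, bgram A l k *ᵥ z k)]

theorem exists_mem_forall_notMem_e2norm_blkT_lt (hA : ∀ l j, e2norm (acol A l j) = 1)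
    {s : Finset (Fin L)} {wt : Fin m → ℝ} (hwt : ∀ l ∈ s, blkT A l wt = 0) {ω : ℝ}
    (hω : ∀ l ∉ s, e2norm (blkT A l wt) ≤ ω) {z : Fin L → Fin d → ℝ} {k₀ : Fin L} (hk₀ : k₀ ∈ s)
    (hgap_nonneg : 0 ≤ 1 - (d - 1) * subCoh A - (2 * #s - 1) * d * blockCoh A)
    (hgap : ω < (1 - (d - 1) * subCoh A - (2 * #s - 1) * d * blockCoh A) * e2norm (z k₀)) :
    ∃ k ∈ s, ∀ l ∉ s,
      e2norm (blkT A l (wt + blockComb A s z)) < e2norm (blkT A k (wt + blockComb A s z)) := by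
  obtain ⟨k, hk, hmax⟩ := s.exists_max_image (fun l => e2norm (z l)) ⟨k₀, hk₀⟩
  have blkT_residual (l : Fin L) :
      blkT A l (wt + blockComb A s z) = blkT A l wt + ∑ j ∈ s, bgram A l j *ᵥ z j := by
    rw [← blkT_blockComb, blkT_eq_mulVec, mulVec_add, blkT_eq_mulVec, blkT_eq_mulVec]
  refine ⟨k, hk, fun l hl => ?_⟩
  calc e2norm (blkT A l (wt + blockComb A s z))
      ≤ ω + #s * (d * blockCoh A * e2norm (z k)) := by
        rw [blkT_residual]
        exact (e2norm_add_le _ _).trans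
          (add_le_add (hω l hl) (e2norm_sum_bgram_mulVec_le A hl hmax))
    _ < (1 - (d - 1) * subCoh A - (#s - 1) * d * blockCoh A) * e2norm (z k) := by
        linarith [mul_le_mul_of_nonneg_left (hmax k₀ hk₀) hgap_nonneg]
    _ ≤ e2norm (blkT A k (wt + blockComb A s z)) := by
        rw [blkT_residual, hwt k hk, zero_add]
        exact mul_e2norm_le_e2norm_sum_bgram_mulVec hA hk hmax

end Blocks

theorem lt_mul_of_div_lt_sq_div {α β ω ξ : ℝ} (hβ : 0 < β) (hβα : β ≤ α) (hξ : 0 < ξ)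
    (h : ω / ξ < β ^ 2 / α) : ω < β * ξ := by
  have hsq : β ^ 2 / α ≤ β := by
    rw [div_le_iff₀ (hβ.trans_le hβα), sq]
    exact mul_le_mul_of_nonneg_left hβα hβ.le
  exact (div_lt_iff₀ hξ).1 (h.trans_le hsq)

theorem stmt0_general {m L d : ℕ} {A : Matrix (Fin m) (Fin L × Fin d) ℝ}
    (hA : ∀ l j, e2norm (acol A l j) = 1) {I : Finset (Fin L)} (hI : #I < L)
    {y wt : Fin m → ℝ} (hwt : ∀ l ∈ I, blkT A l wt = 0)
    {xt : Fin L → Fin d → ℝ} (hxt : blockComb A I xt = y - wt)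
    {ω ξ : ℝ} (hω : ∀ l ∉ I, e2norm (blkT A l wt) ≤ ω) (hξ : ∀ l ∈ I, ξ ≤ e2norm (xt l))
    (hgap_nonneg : 0 ≤ 1 - (d - 1) * subCoh A - (2 * #I - 1) * d * blockCoh A)
    (hgap : ω < (1 - (d - 1) * subCoh A - (2 * #I - 1) * d * blockCoh A) * ξ)
    {S : Finset (Fin L)} (hS : S ⊂ I) {v : Fin m → ℝ} (hv : ∃ c, v = blockComb A S c) :
    (⨆ l : {l : Fin L // l ∉ I}, e2norm (blkT A l.1 (y - v))) <
      ⨆ l : {l : Fin L // l ∈ I}, e2norm (blkT A l.1 (y - v)) := by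
  obtain ⟨c, rfl⟩ := hv
  obtain ⟨k₀, hk₀I, hk₀S⟩ := exists_of_ssubset hS
  obtain ⟨l₁, hl₁⟩ : ∃ l, l ∉ I := by
    simpa using exists_mem_notMem_of_card_lt_card (s := I) (t := univ) (by simpa using hI)
  have : Nonempty {l // l ∉ I} := ⟨l₁, hl₁⟩
  set z := xt - (S : Set (Fin L)).indicator c with hz
  have hresidual : y - blockComb A S c = wt + blockComb A I z := by
    rw [← blockComb_sub_blockComb_of_subset A hS.subset, hxt]
    abel
  have hzk₀ : z k₀ = xt k₀ := by
    rw [hz, Pi.sub_apply, Set.indicator_of_notMem (mod_cast hk₀S), sub_zero]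
  obtain ⟨k, hk, hlt⟩ := exists_mem_forall_notMem_e2norm_blkT_lt hA hwt hω hk₀I hgap_nonneg
    (hgap.trans_le (mul_le_mul_of_nonneg_left (hzk₀ ▸ hξ k₀ hk₀I) hgap_nonneg))
  rw [hresidual]
  exact ciSup_lt_ciSup_of_forall_lt ⟨k, hk⟩ fun l => hlt l l.2

/-- **Theorem 1 (noisy block-OMP recovery).**  Under conditions (i) and (ii), for every
subset `S ⊆ I1` with `|S| ≤ K-1`, the residual `r = y - P_S y` (where `P_S y` is
characterized as the orthogonal projection of `y` onto the span of the blocks `A_l, l ∈ S`)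
correlates strictly better with some block inside the support `I1` than with every block
outside `I1`; hence block-OMP selects only indices from `I1` during its first `K`
iterations and recovers the exact block-sparsity pattern. -/
theorem stmt0 {m L d K : ℕ}
    (hm : m < L * d) (hd : 0 < d) (hK1 : 1 ≤ K)
    (A : Matrix (Fin m) (Fin L × Fin d) ℝ)
    (hA : ∀ l j, e2norm (acol A l j) = 1)
    (μB ν : ℝ) (hμB : μB = blockCoh A) (hν : ν = subCoh A)
    (x : Fin L × Fin d → ℝ)
    (I1 : Finset (Fin L))
    (hI1 : ∀ l, l ∈ I1 ↔ ∃ j, x (l, j) ≠ 0)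
    (hcard : I1.card = K) (hKL : K < L)
    (y w : Fin m → ℝ) (hy : y = A *ᵥ x + w)
    -- `w̃ = w - Pw`: `w - w̃` lies in the column span of `A_nz` and `w̃` is orthogonal to it
    (wt : Fin m → ℝ)
    (hwt1 : ∃ c : Fin L → Fin d → ℝ, ∀ i, w i - wt i = ∑ l ∈ I1, ∑ j, A i (l, j) * c l j)
    (hwt2 : ∀ l ∈ I1, ∀ j, dotp (acol A l j) wt = 0)
    -- `x̃ = x_nz + A_nz† w`: `A_nz x̃ = y - w̃` and `x̃ - x_nz` lies in the row space of `A_nz`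
    (xt : Fin L → Fin d → ℝ)
    (hxt1 : ∀ i, (∑ l ∈ I1, ∑ j, A i (l, j) * xt l j) = y i - wt i)
    (hxt2 : ∃ u : Fin m → ℝ, ∀ l ∈ I1, ∀ j, xt l j - x (l, j) = dotp (acol A l j) u)
    (ω xbmin : ℝ)
    (hω : ω = ⨆ l : Fin L, e2norm (blkT A l wt))
    (hxbmin : xbmin = ⨅ l : {l : Fin L // l ∈ I1}, e2norm (xt l.1))
    (hxbminpos : 0 < xbmin)
    -- condition (i)
    (hcond1 : 0 < 1 - ((d : ℝ) - 1) * ν - (2 * (K : ℝ) - 1) * d * μB)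
    -- condition (ii)
    (hcond2 : (1 - ((d : ℝ) - 1) * ν - (2 * (K : ℝ) - 1) * d * μB) ^ 2 /
        (1 - ((d : ℝ) - 1) * ν - ((K : ℝ) - 1) * d * μB) > ω / xbmin) :
    ∀ S : Finset (Fin L), S ⊆ I1 → S.card < K →
      ∀ PSy : Fin m → ℝ,
        (∃ c : Fin L → Fin d → ℝ, ∀ i, PSy i = ∑ l ∈ S, ∑ j, A i (l, j) * c l j) →
        (∀ l ∈ S, ∀ j, dotp (acol A l j) (fun i => y i - PSy i) = 0) →
        (⨆ l : {l : Fin L // l ∉ I1}, e2norm (blkT A l.1 (fun i => y i - PSy i))) <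
          ⨆ l : {l : Fin L // l ∈ I1}, e2norm (blkT A l.1 (fun i => y i - PSy i)) := by
  intro S hS hSK PSy ⟨c, hc⟩ _
  subst hμB hν hω hxbmin hcard
  have hμ : 0 ≤ (#I1 : ℝ) * d * blockCoh A := mul_nonneg (by positivity) (blockCoh_nonneg A)
  exact stmt0_general hA hKL (fun l hl => funext (hwt2 l hl)) (funext hxt1)
    (fun l _ => Finite.le_ciSup (fun l => e2norm (blkT A l wt)) l)
    (fun l hl => Finite.ciInf_le (fun l : {l // l ∈ I1} => e2norm (xt l.1)) ⟨l, hl⟩)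
    hcond1.le (lt_mul_of_div_lt_sq_div hcond1 (by linarith) hxbminpos hcond2)
    (hS.ssubset_of_ne fun h => hSK.ne (congrArg card h)) ⟨c, funext hc⟩
end
end

section
/- Suppose (i) 1 − (2K−1)μ > 0 and (ii) (1 − (2K−1)μ)² / (1 − (K−1)μ) > ‖A^T w̃‖_∞ / x_min. Then for every subset S ⊆ I1 with 0 ≤ |S| ≤ K−1, the residual r = y − P_S y, where P_S is the orthogonal projection onto the span of the columns {a_i : i ∈ S}, satisfies max_{i ∉ I1} |a_i^T r| < max_{i ∈ I1} |a_i^T r|; hence OMP selects only indices from I1 throughout its first K iterations and recovers the exact sparsity pattern. -/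
noncomputable section

open Finset Matrix

/-- Coherence `μ = max_{i ≠ j} |a_iᵀ a_j|` of a matrix with columns `a_1, …, a_n`. -/
def coh {m n : ℕ} (A : Matrix (Fin m) (Fin n) ℝ) : ℝ :=
  ⨆ p : {p : Fin n × Fin n // p.1 ≠ p.2},
    |dotp (fun i => A i p.1.1) (fun i => A i p.1.2)|

/-! Subtracting from `y` any combination of the columns in `S` leaves a signal with coefficients
`z` on `I1` plus the noise `w̃`. Since `S` is a proper subset of `I1`, some `z k` is an untouched
entry of `x̃`, so the largest entry `z j` has `|z j| ≥ x_min`. The correlation of the residual with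
`a_j` is at least `(1 - (K - 1)μ) |z j|`, because `w̃` is orthogonal to `a_j`; with a column outside
`I1` it is at most `Kμ |z j| + ‖Aᵀ w̃‖_∞`. The first exceeds the second as soon as
`‖Aᵀ w̃‖_∞ < (1 - (2K - 1)μ) x_min`, which (ii) implies because
`1 - (2K - 1)μ ≤ 1 - (K - 1)μ`. -/

lemma lt_mul_of_div_lt_sq_div_s2 {b c d w : ℝ} (hb : 0 < b) (hbc : b ≤ c) (hd : 0 < d)
    (h : w / d < b ^ 2 / c) : w < b * d := by
  have hbsq : b ^ 2 / c ≤ b := by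
    rw [div_le_iff₀ (hb.trans_le hbc), sq]
    exact mul_le_mul_of_nonneg_left hbc hb.le
  exact (div_lt_iff₀ hd).mp (h.trans_le hbsq)

section Module

variable {R M ι : Type*} [Ring R] [AddCommGroup M] [Module R M]

lemma exists_sum_smul_sub_eq_sum_smul {v : ι → M} {s t : Finset ι} (hst : s ⊆ t) {p : M}
    (hp : p ∈ Submodule.span R (v '' s)) (x : ι → R) :
    ∃ z : ι → R, ∑ i ∈ t, x i • v i - p = ∑ i ∈ t, z i • v i ∧ ∀ i ∉ s, z i = x i := by
  classical
  obtain ⟨c, rfl⟩ := Submodule.mem_span_image_finset_iff_exists_fun' R |>.mp hp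
  refine ⟨fun i => x i - if i ∈ s then c i else 0, ?_, fun i hi => by simp [hi]⟩
  simp only [sub_smul, sum_sub_distrib, ite_smul, zero_smul, sum_ite_mem,
    inter_eq_right.mpr hst]

end Module

section InnerProductSpace

variable {𝕜 E ι : Type*} [RCLike 𝕜] [SeminormedAddCommGroup E] [InnerProductSpace 𝕜 E]
  {a : ι → E} {s : Finset ι} {z : ι → 𝕜} {μ : ℝ}

lemma norm_inner_sum_smul_le {v : E} {b : ℝ} (hμ : ∀ j ∈ s, ‖inner 𝕜 v (a j)‖ ≤ μ)
    (hz : ∀ j ∈ s, ‖z j‖ ≤ b) : ‖inner 𝕜 v (∑ j ∈ s, z j • a j)‖ ≤ #s * (b * μ) := by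
  rw [inner_sum, ← nsmul_eq_mul]
  refine norm_sum_le_of_le _ (fun j hj => ?_) |>.trans_eq (sum_const _)
  rw [inner_smul_right, norm_mul]
  exact mul_le_mul (hz j hj) (hμ j hj) (norm_nonneg _) ((norm_nonneg _).trans (hz j hj))

lemma le_norm_inner_sum_smul {i : ι} (hi : i ∈ s) (ha : ‖a i‖ = 1)
    (hμ : ∀ j ∈ s, i ≠ j → ‖inner 𝕜 (a i) (a j)‖ ≤ μ) (hz : ∀ j ∈ s, ‖z j‖ ≤ ‖z i‖) :
    (1 - (#s - 1) * μ) * ‖z i‖ ≤ ‖inner 𝕜 (a i) (∑ j ∈ s, z j • a j)‖ := by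
  classical
  have hoff : ‖inner 𝕜 (a i) (∑ j ∈ s.erase i, z j • a j)‖ ≤ (#s - 1) * (‖z i‖ * μ) := by
    rw [← cast_card_erase_of_mem hi]
    exact norm_inner_sum_smul_le
      (fun j hj => hμ j (mem_of_mem_erase hj) (ne_of_mem_erase hj).symm)
      (fun j hj => hz j (mem_of_mem_erase hj))
  have hdiag : inner 𝕜 (a i) (z i • a i) = z i := by
    simp [inner_smul_right, inner_self_eq_norm_sq_to_K, ha]
  rw [← add_sum_erase _ _ hi, inner_add_right, hdiag]
  linarith [norm_sub_le_norm_add (z i) (inner 𝕜 (a i) (∑ j ∈ s.erase i, z j • a j))]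

theorem stmt2_general {I S : Finset ι} {x : ι → 𝕜} {y e p : E} {η ξ : ℝ}
    (hI : ∃ i, i ∉ I) (ha : ∀ i ∈ I, ‖a i‖ = 1)
    (hμ : ∀ i, ∀ j ∈ I, i ≠ j → ‖inner 𝕜 (a i) (a j)‖ ≤ μ)
    (hy : ∑ i ∈ I, x i • a i = y - e) (he : ∀ i ∈ I, inner 𝕜 (a i) e = 0)
    (hη : ∀ i ∉ I, ‖inner 𝕜 (a i) e‖ ≤ η) (hξ : ∀ i ∈ I, ξ ≤ ‖x i‖)
    (hμI : 0 ≤ 1 - (2 * (#I : ℝ) - 1) * μ) (hηξ : η < (1 - (2 * (#I : ℝ) - 1) * μ) * ξ)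
    (hSI : S ⊆ I) (hcard : #S < #I) (hp : p ∈ Submodule.span 𝕜 (a '' S)) :
    (⨆ i : {i // i ∉ I}, ‖inner 𝕜 (a i) (y - p)‖) <
      ⨆ i : {i // i ∈ I}, ‖inner 𝕜 (a i) (y - p)‖ := by
  obtain ⟨z, hz, hzx⟩ := exists_sum_smul_sub_eq_sum_smul hSI hp x
  have hres : y - p = ∑ i ∈ I, z i • a i + e := by rw [← hz, hy]; abel
  obtain ⟨k, hkI, hkS⟩ := exists_mem_notMem_of_card_lt_card hcard
  obtain ⟨j, hj, hmax⟩ := exists_max_image I (fun i => ‖z i‖) ⟨k, hkI⟩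
  have hξz : ξ ≤ ‖z j‖ := (hξ k hkI).trans (hzx k hkS ▸ hmax k hkI)
  have hoff (i : {i // i ∉ I}) : ‖inner 𝕜 (a i) (y - p)‖ ≤ #I * (‖z j‖ * μ) + η := by
    rw [hres, inner_add_right]
    have hμi : ∀ l ∈ I, ‖inner 𝕜 (a i) (a l)‖ ≤ μ :=
      fun l hl => hμ i l hl (ne_of_mem_of_not_mem hl i.2).symm
    exact norm_add_le_of_le (norm_inner_sum_smul_le hμi hmax) (hη i i.2)
  have hon : (1 - (#I - 1) * μ) * ‖z j‖ ≤ ‖inner 𝕜 (a j) (y - p)‖ := by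
    rw [hres, inner_add_right, he j hj, add_zero]
    exact le_norm_inner_sum_smul hj (ha j hj) (hμ j) hmax
  have : Nonempty {i // i ∉ I} := nonempty_subtype.mpr hI
  calc (⨆ i : {i // i ∉ I}, ‖inner 𝕜 (a i) (y - p)‖)
      ≤ #I * (‖z j‖ * μ) + η := ciSup_le hoff
    _ < (1 - (#I - 1) * μ) * ‖z j‖ := by
      linarith [mul_le_mul_of_nonneg_left hξz hμI]
    _ ≤ ‖inner 𝕜 (a j) (y - p)‖ := hon
    _ ≤ ⨆ i : {i // i ∈ I}, ‖inner 𝕜 (a i) (y - p)‖ :=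
      le_ciSup (f := fun i : {i // i ∈ I} => ‖inner 𝕜 (a i) (y - p)‖)
        (Finite.bddAbove_range _) ⟨j, hj⟩

end InnerProductSpace

section EuclideanSpace

variable {m n : ℕ} (A : Matrix (Fin m) (Fin n) ℝ)

/-- The column `a_i` of `A` as a vector of Euclidean space, so that `dotp` and `e2norm` of columns
become Mathlib's inner product and norm. -/
def euclideanCol (i : Fin n) : EuclideanSpace ℝ (Fin m) := WithLp.toLp 2 fun r => A r i

lemma norm_euclideanCol (i : Fin n) : ‖euclideanCol A i‖ = e2norm fun r => A r i := by
  simp [euclideanCol, e2norm, EuclideanSpace.norm_eq]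

lemma inner_euclideanCol (i : Fin n) (v : Fin m → ℝ) :
    inner ℝ (euclideanCol A i) (WithLp.toLp 2 v) = dotp (fun r => A r i) v := by
  simp [euclideanCol, dotp, PiLp.inner_apply, mul_comm]

variable {A}

lemma sum_smul_euclideanCol_eq {s : Finset (Fin n)} {c : Fin n → ℝ} {v : Fin m → ℝ}
    (h : ∀ r, ∑ i ∈ s, A r i * c i = v r) :
    ∑ i ∈ s, c i • euclideanCol A i = WithLp.toLp 2 v := by
  ext r
  simp [euclideanCol, ← h, mul_comm]

lemma toLp_mem_span_euclideanCol {s : Finset (Fin n)} {v : Fin m → ℝ}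
    (h : ∃ c : Fin n → ℝ, ∀ r, v r = ∑ i ∈ s, A r i * c i) :
    WithLp.toLp 2 v ∈ Submodule.span ℝ (euclideanCol A '' s) := by
  obtain ⟨c, hc⟩ := h
  rw [← sum_smul_euclideanCol_eq fun r => (hc r).symm]
  exact Submodule.sum_smul_mem _ _ fun i hi => Submodule.subset_span ⟨i, hi, rfl⟩

variable (A)

lemma norm_inner_euclideanCol_le_iSup (v : Fin m → ℝ) (i : Fin n) :
    ‖inner ℝ (euclideanCol A i) (WithLp.toLp 2 v)‖ ≤ ⨆ j, |dotp (fun r => A r j) v| := by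
  rw [inner_euclideanCol]
  exact le_ciSup (f := fun j => |dotp (fun r => A r j) v|) (Finite.bddAbove_range _) i

lemma coh_nonneg : 0 ≤ coh A := Real.iSup_nonneg fun _ => abs_nonneg _

lemma norm_inner_euclideanCol_le_coh {i j : Fin n} (hij : i ≠ j) :
    ‖inner ℝ (euclideanCol A i) (euclideanCol A j)‖ ≤ coh A := by
  rw [euclideanCol.eq_def A j, inner_euclideanCol]
  exact le_ciSup (f := fun p : {p : Fin n × Fin n // p.1 ≠ p.2} =>
    |dotp (fun r => A r p.1.1) (fun r => A r p.1.2)|) (Finite.bddAbove_range _) ⟨(i, j), hij⟩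

end EuclideanSpace

/-- **Noisy OMP recovery (Tropp-type condition).**  Under (i) `1 - (2K-1)μ > 0` and
(ii) `(1-(2K-1)μ)²/(1-(K-1)μ) > ‖Aᵀ w̃‖_∞ / x_min`, for every subset `S ⊆ I1` with
`|S| ≤ K-1`, the residual `r = y - P_S y` (with `P_S y` the orthogonal projection of `y`
onto the span of the columns indexed by `S`) correlates strictly better with some column in
the support `I1` than with every column outside `I1`; hence OMP selects only indices from
`I1` in its first `K` iterations and recovers the exact sparsity pattern. -/
theorem stmt2 {m n K : ℕ}
    (hmn : m < n) (hK1 : 1 ≤ K) (hKn : K < n)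
    (A : Matrix (Fin m) (Fin n) ℝ)
    (hA : ∀ i, e2norm (fun r => A r i) = 1)
    (μ : ℝ) (hμ : μ = coh A)
    (x : Fin n → ℝ)
    (I1 : Finset (Fin n)) (hI1 : ∀ i, i ∈ I1 ↔ x i ≠ 0) (hcard : I1.card = K)
    (y w : Fin m → ℝ) (hy : y = A *ᵥ x + w)
    -- `w̃ = w - Pw`: `w - w̃` lies in the span of the support columns, `w̃` is orthogonal to them
    (wt : Fin m → ℝ)
    (hwt1 : ∃ c : Fin n → ℝ, ∀ r, w r - wt r = ∑ i ∈ I1, A r i * c i)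
    (hwt2 : ∀ i ∈ I1, dotp (fun r => A r i) wt = 0)
    -- `x̃ = x_nz + A_nz† w`: `A_nz x̃ = y - w̃` and `x̃ - x_nz` lies in the row space of `A_nz`
    (xt : Fin n → ℝ)
    (hxt1 : ∀ r, (∑ i ∈ I1, A r i * xt i) = y r - wt r)
    (hxt2 : ∃ u : Fin m → ℝ, ∀ i ∈ I1, xt i - x i = dotp (fun r => A r i) u)
    (xmin : ℝ) (hxmin : xmin = ⨅ i : {i : Fin n // i ∈ I1}, |xt i.1|)
    (hxminpos : 0 < xmin)
    -- condition (i)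
    (hcond1 : 0 < 1 - (2 * (K : ℝ) - 1) * μ)
    -- condition (ii)
    (hcond2 : (1 - (2 * (K : ℝ) - 1) * μ) ^ 2 / (1 - ((K : ℝ) - 1) * μ) >
        (⨆ i : Fin n, |dotp (fun r => A r i) wt|) / xmin) :
    ∀ S : Finset (Fin n), S ⊆ I1 → S.card < K →
      ∀ PSy : Fin m → ℝ,
        (∃ c : Fin n → ℝ, ∀ r, PSy r = ∑ i ∈ S, A r i * c i) →
        (∀ i ∈ S, dotp (fun r => A r i) (fun r => y r - PSy r) = 0) →
        (⨆ i : {i : Fin n // i ∉ I1}, |dotp (fun r => A r i.1) (fun r' => y r' - PSy r')|) <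
          ⨆ i : {i : Fin n // i ∈ I1}, |dotp (fun r => A r i.1) (fun r' => y r' - PSy r')| := by
  subst hcard hμ hxmin
  rintro S hSI hSK p hp -
  obtain ⟨t, -, ht⟩ := exists_mem_notMem_of_card_lt_card (hKn.trans_eq (card_fin n).symm)
  have hKμ : 0 ≤ #I1 * coh A := mul_nonneg (Nat.cast_nonneg _) (coh_nonneg A)
  have hηξ := lt_mul_of_div_lt_sq_div_s2 hcond1 (by linarith) hxminpos hcond2
  simp only [← inner_euclideanCol, ← norm_euclideanCol] at hA hwt2 ⊢
  exact stmt2_general ⟨t, ht⟩ (fun i _ => hA i) (fun _ _ _ => norm_inner_euclideanCol_le_coh A)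
    (sum_smul_euclideanCol_eq hxt1) hwt2 (fun i _ => norm_inner_euclideanCol_le_iSup A wt i)
    (fun i hi => ciInf_le (f := fun i : {i // i ∈ I1} => |xt i|) (Finite.bddBelow_range _) ⟨i, hi⟩)
    hcond1.le hηξ hSI hSK (toLp_mem_span_euclideanCol hp)
end
end
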